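/- arXiv:2511.01712 — 3 statements merged into one kernel-verified Lean document; each statement's English description precedes it below -/
import Mathlib

section
/- Let F be a field of characteristic p and W ⊆ F a finite 𝔽_p-subspace of F (a finite additive subgroup). Put ψ(X) = X·∏_{0≠w∈W}(1 − X/w) ∈ F[X]. Then in the rational function field F(X) the identity Σ_{w∈W} 1/(X − w) = 1/ψ(X) holds. -/
open scoped Classical

/-- Each Lagrange basis polynomial is the nodal polynomial with one linear factor removed,
up to the nodal weight. -/
theorem lagrange_basis_mul_X_sub_C {F : Type*} [Field F] (s : Finset F) {w : F} (hw : w ∈ s) :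
    Lagrange.basis s id w * (Polynomial.X - Polynomial.C w) =
      Polynomial.C (Lagrange.nodalWeight s id w) * Lagrange.nodal s id := by
  rw [Lagrange.nodal_eq_mul_nodal_erase hw]
  simp only [Lagrange.basis, Lagrange.basisDivisor, Lagrange.nodalWeight, Lagrange.nodal,
    Finset.prod_mul_distrib, map_prod, id]
  ring

/-- The nodal weights of a finite additive subgroup are all equal. -/
theorem nodalWeight_addSubgroup {F : Type*} [Field F] (W : AddSubgroup F)
    (hW : (W : Set F).Finite) {w : F} (hw : w ∈ W) :
    Lagrange.nodalWeight hW.toFinset id w = Lagrange.nodalWeight hW.toFinset id 0 := by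
  unfold Lagrange.nodalWeight
  refine Finset.prod_bij' (fun u _ => u - w) (fun u _ => u + w) ?_ ?_ ?_ ?_ ?_
  · intro u hu
    simp only [Finset.mem_erase, Set.Finite.mem_toFinset, SetLike.mem_coe] at hu ⊢
    exact ⟨sub_ne_zero.2 hu.1, W.sub_mem hu.2 hw⟩
  · intro u hu
    simp only [Finset.mem_erase, Set.Finite.mem_toFinset, SetLike.mem_coe] at hu ⊢
    exact ⟨by simpa using hu.1, W.add_mem hu.2 hw⟩
  all_goals simp

/-- Let `F` be a field of characteristic `p` and `W ⊆ F` a finite additive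
subgroup (an `𝔽_p`-subspace).  With `ψ(X) = X·∏_{0 ≠ w ∈ W} (1 - X/w) ∈ F[X]`, one has the
identity `∑_{w ∈ W} 1/(X - w) = 1/ψ(X)` in the rational function field `F(X)`. -/
theorem sum_inv_linear_eq_inv_additive_polynomial
    (p : ℕ) (hp : p.Prime) (F : Type) [Field F] [CharP F p]
    (W : AddSubgroup F) (hW : (W : Set F).Finite) :
    (∑ w ∈ hW.toFinset, (RatFunc.X - RatFunc.C w)⁻¹) =
      (algebraMap (Polynomial F) (RatFunc F)
        (Polynomial.X *
          ∏ w ∈ hW.toFinset.erase 0, (1 - Polynomial.C w⁻¹ * Polynomial.X)))⁻¹ := by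
  set s := hW.toFinset with hs
  set ψ : Polynomial F :=
    Polynomial.X * ∏ w ∈ s.erase 0, (1 - Polynomial.C w⁻¹ * Polynomial.X) with hψ
  have h0 : (0 : F) ∈ s := by simp [hs]
  have hψ_basis : ψ = Lagrange.basis s id 0 * (Polynomial.X - Polynomial.C 0) := by
    rw [hψ, mul_comm, Polynomial.C_0, sub_zero]
    congr 1
    refine Finset.prod_congr rfl fun u hu => ?_
    have hu0 : u ≠ 0 := Finset.ne_of_mem_erase hu
    have hC : Polynomial.C u⁻¹ * Polynomial.C u = 1 := by
      rw [← Polynomial.C_mul, inv_mul_cancel₀ hu0, Polynomial.C_1]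
    simp only [Lagrange.basisDivisor, id, zero_sub, inv_neg, Polynomial.C_neg]
    linear_combination -hC
  have hbasis : ∀ w ∈ s, Lagrange.basis s id w * (Polynomial.X - Polynomial.C w) = ψ := by
    intro w hw
    rw [hψ_basis, lagrange_basis_mul_X_sub_C s hw, lagrange_basis_mul_X_sub_C s h0,
      nodalWeight_addSubgroup W hW (by simpa [hs] using hw)]
  have hψ_ne : ψ ≠ 0 := by
    rw [hψ_basis]
    exact mul_ne_zero (Lagrange.basis_ne_zero Function.injective_id.injOn h0)
      (Polynomial.X_sub_C_ne_zero 0)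
  have hψ_map : algebraMap (Polynomial F) (RatFunc F) ψ ≠ 0 :=
    RatFunc.algebraMap_ne_zero hψ_ne
  have hterm : ∀ w ∈ s, (RatFunc.X - RatFunc.C w)⁻¹ =
      algebraMap (Polynomial F) (RatFunc F) (Lagrange.basis s id w) *
        (algebraMap (Polynomial F) (RatFunc F) ψ)⁻¹ := by
    intro w hw
    have h := congrArg (algebraMap (Polynomial F) (RatFunc F)) (hbasis w hw)
    rw [map_mul, map_sub, RatFunc.algebraMap_X, RatFunc.algebraMap_C] at h
    rw [← h] at hψ_map ⊢
    have := left_ne_zero_of_mul hψ_map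
    have := right_ne_zero_of_mul hψ_map
    field_simp
  rw [Finset.sum_congr rfl hterm, ← Finset.sum_mul, ← map_sum,
    Lagrange.sum_basis Function.injective_id.injOn ⟨0, h0⟩, map_one, one_mul]
end

section
/- Let F be a field of characteristic p containing 𝔽_q, W ⊆ F a finite 𝔽_q-submodule, and n an integer with n > q−1 such that n ≡ 0 (mod q) or n ≡ −1 (mod q). Then the coefficient of X^{q−1} in the Goss polynomial G_{n,W} is zero. -/
open scoped Classical

open Polynomial Lagrange

section Additive

variable {F : Type*} [Field F] {s : Finset F}

lemma taylor_nodal_of_add_mem {w : F} (hw : ∀ x, x + w ∈ s ↔ x ∈ s) :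
    taylor w (nodal s id) = nodal s id := by
  rw [taylor_apply, nodal, prod_comp]
  refine Finset.prod_bij' (fun v _ => v - w) (fun v _ => v + w) ?_ ?_ ?_ ?_ ?_
  · intro v hv
    rw [← hw]; simpa using hv
  · intro v hv
    exact (hw v).2 hv
  · intro v _; simp
  · intro v _; simp
  · intro v _
    simp only [id, sub_comp, X_comp, C_comp, C_sub]
    ring

/-- For an additive subgroup `s`, the positive-order Hasse derivatives of `∏ (X - w)` are
constant: they have degree less than `#s` and take a single value on `s`. -/
lemma hasseDeriv_nodal (h0 : 0 ∈ s) (hs : ∀ w ∈ s, ∀ x, x + w ∈ s ↔ x ∈ s) {i : ℕ} (hi : i ≠ 0) :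
    hasseDeriv i (nodal s id) = C ((nodal s id).coeff i) := by
  have hcard : 0 < s.card := Finset.card_pos.2 ⟨0, h0⟩
  refine eq_of_degrees_lt_of_eval_finset_eq s ?_ ?_ ?_
  · refine degree_le_natDegree.trans_lt ?_
    have h := natDegree_hasseDeriv_le (nodal s id) i
    rw [natDegree_nodal] at h
    exact_mod_cast (by omega)
  · exact degree_C_le.trans_lt (by exact_mod_cast hcard)
  · intro w hw
    rw [eval_C, ← taylor_coeff, taylor_nodal_of_add_mem (hs w hw)]

lemma nodal_coeff_zero (h0 : 0 ∈ s) : (nodal s id).coeff 0 = 0 := by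
  rw [coeff_zero_eq_eval_zero]
  exact eval_nodal_at_node (v := id) h0

lemma nodal_coeff_one_ne_zero (h0 : 0 ∈ s) : (nodal s id).coeff 1 ≠ 0 := by
  have h := eval_nodal_derivative_eval_node_eq (v := id) h0
  rw [id, eval_nodal, ← coeff_zero_eq_eval_zero, coeff_derivative] at h
  intro h'
  norm_num [h'] at h
  rw [eq_comm, Finset.prod_eq_zero_iff] at h
  obtain ⟨a, ha, ha'⟩ := h
  simp at ha ha'
  exact ha.1 ha'

lemma eq_prime_pow_of_nodal_coeff_ne_zero {p : ℕ} [Fact p.Prime] [CharP F p] (h0 : 0 ∈ s)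
    (hs : ∀ w ∈ s, ∀ x, x + w ∈ s ↔ x ∈ s) {m : ℕ} (hm : (nodal s id).coeff m ≠ 0) :
    ∃ j, m = p ^ j := by
  have hm0 : m ≠ 0 := by
    rintro rfl
    exact hm (nodal_coeff_zero h0)
  refine ⟨_, Choose.eq_pow_multiplicity_of_choose_modEq_zero_nat (p := p) (by omega) ?_⟩
  intro i hi
  rw [Finset.mem_Icc] at hi
  have h := congrArg (fun f => coeff f (m - i)) (hasseDeriv_nodal h0 hs (i := i) (by omega))
  simp only [hasseDeriv_coeff, coeff_C, if_neg (show m - i ≠ 0 by omega),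
    Nat.sub_add_cancel (show i ≤ m by omega)] at h
  rw [Nat.modEq_zero_iff_dvd, ← CharP.cast_eq_zero_iff F p]
  exact (mul_eq_zero.1 h).resolve_right hm

lemma pow_eq_self_of_nodal_coeff_ne_zero (h0 : 0 ∈ s) {a : F} (ha : a ≠ 0)
    (hs : ∀ x, a * x ∈ s ↔ x ∈ s) {m : ℕ} (hm : (nodal s id).coeff m ≠ 0) : a ^ m = a := by
  have key : (nodal s id).comp (C a * X) = C (a ^ s.card) * nodal s id := by
    rw [nodal, prod_comp, C_pow, ← Finset.prod_const, ← Finset.prod_mul_distrib]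
    refine Finset.prod_bij' (fun v _ => a⁻¹ * v) (fun v _ => a * v) ?_ ?_ ?_ ?_ ?_
    · intro v hv
      rw [← hs]; simpa [ha] using hv
    · intro v hv
      exact (hs v).2 hv
    · intro v _; simp [ha]
    · intro v _; simp [ha]
    · intro v _
      simp only [id, sub_comp, X_comp, C_comp, mul_sub, ← C_mul]
      rw [mul_inv_cancel_left₀ ha]
  have h : ∀ k, (nodal s id).coeff k ≠ 0 → a ^ k = a ^ s.card := by
    intro k hk
    have := congrArg (fun f => coeff f k) key
    simp only [comp_C_mul_X_coeff, coeff_C_mul] at this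
    exact mul_left_cancel₀ hk (this.trans (mul_comm _ _))
  rw [h m hm, ← h 1 (nodal_coeff_one_ne_zero h0), pow_one]

/-- Additivity of `∏ (X - w)` over an additive subgroup. -/
lemma taylor_map_nodal {L : Type*} [Field L] [Algebra F L] (h0 : 0 ∈ s)
    (hs : ∀ w ∈ s, ∀ x, x + w ∈ s ↔ x ∈ s) (y : L) :
    taylor y ((nodal s id).map (algebraMap F L)) =
      (nodal s id).map (algebraMap F L) + C (aeval y (nodal s id)) := by
  ext i
  rcases eq_or_ne i 0 with rfl | hi
  · simp [nodal_coeff_zero h0]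
  · have hmap : hasseDeriv i ((nodal s id).map (algebraMap F L)) =
        (hasseDeriv i (nodal s id)).map (algebraMap F L) := by
      ext
      simp [hasseDeriv_coeff]
    rw [taylor_coeff, hmap, hasseDeriv_nodal h0 hs hi]
    simp [coeff_C, hi]

end Additive

lemma exists_eq_add_mul_of_coeff_pow_ne_zero {R : Type*} [CommSemiring R] {P : R[X]} {q : ℕ}
    (hP : ∀ m, P.coeff m ≠ 0 → m = 1 ∨ q ∣ m) (k m : ℕ) (hm : (P ^ k).coeff m ≠ 0) :
    ∃ a b, m = a + q * b ∧ a ≤ k ∧ (a = k → b = 0) := by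
  induction k generalizing m with
  | zero =>
    refine ⟨0, 0, ?_, le_rfl, fun _ => rfl⟩
    by_contra h
    exact hm (by rw [pow_zero, coeff_one, if_neg (by omega)])
  | succ k ih =>
    rw [pow_succ, coeff_mul] at hm
    obtain ⟨⟨i, j⟩, hij, hne⟩ := Finset.exists_ne_zero_of_sum_ne_zero hm
    rw [Finset.HasAntidiagonal.mem_antidiagonal] at hij
    obtain ⟨a, b, rfl, hak, hab⟩ := ih i (left_ne_zero_of_mul hne)
    simp only at hij
    rcases hP j (right_ne_zero_of_mul hne) with rfl | ⟨c, rfl⟩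
    · exact ⟨a + 1, b, by omega, by omega, fun h => hab (by omega)⟩
    · exact ⟨a, b + c, by rw [← hij]; ring, by omega, fun h => by omega⟩

lemma X_add_C_mul_mk_inv {L : Type*} [Field L] {a : L} (ha : a ≠ 0) :
    (PowerSeries.X + PowerSeries.C a) * PowerSeries.mk (fun n => (-1) ^ n * a⁻¹ ^ (n + 1)) = 1 := by
  ext n
  cases n with
  | zero => simp [add_mul, ha]
  | succ n =>
    rw [add_mul, map_add, PowerSeries.coeff_succ_X_mul, PowerSeries.coeff_C_mul]
    simp only [PowerSeries.coeff_mk, PowerSeries.coeff_one, Nat.add_one_ne_zero, if_false]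
    rw [pow_succ a⁻¹ (n + 1), pow_succ (-1 : L) n]
    linear_combination (-(-1) ^ n * a⁻¹ ^ (n + 1)) * mul_inv_cancel₀ ha

/-- The generating series of the power sums `∑ (y - w)^{-(n+1)}` is, up to signs, the
inverse of `P(y) + P(X)` times the linear coefficient of `P = ∏ (X - w)`. -/
lemma nodal_add_mul_mk_sum_inv_pow {F L : Type*} [Field F] [Field L] [Algebra F L] {s : Finset F}
    (h0 : 0 ∈ s) (hs : ∀ w ∈ s, ∀ x, x + w ∈ s ↔ x ∈ s) (y : L)
    (hy : ∀ w ∈ s, y - algebraMap F L w ≠ 0) :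
    (((nodal s id).map (algebraMap F L) + C (aeval y (nodal s id)) : L[X]) : PowerSeries L) *
      PowerSeries.mk (fun n => (-1) ^ n * ∑ w ∈ s, (y - algebraMap F L w)⁻¹ ^ (n + 1)) =
    PowerSeries.C (algebraMap F L ((nodal s id).coeff 1)) := by
  have hprod : (nodal s id).map (algebraMap F L) + C (aeval y (nodal s id)) =
      ∏ w ∈ s, (X + C (y - algebraMap F L w)) := by
    rw [← taylor_map_nodal h0 hs, taylor_apply, nodal, Polynomial.map_prod, prod_comp]
    refine Finset.prod_congr rfl fun w _ => ?_
    simp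
    ring
  have hderiv : ∑ w ∈ s, ∏ v ∈ s.erase w, (X + C (y - algebraMap F L v)) =
      C (algebraMap F L ((nodal s id).coeff 1)) := by
    have h := congrArg derivative hprod
    rw [derivative_prod_finset, derivative_add, derivative_C, derivative_map, ← hasseDeriv_one,
      hasseDeriv_nodal h0 hs one_ne_zero, map_C, add_zero] at h
    rw [h]
    simp
  have hsum : PowerSeries.mk (fun n => (-1) ^ n * ∑ w ∈ s, (y - algebraMap F L w)⁻¹ ^ (n + 1)) =
      ∑ w ∈ s, PowerSeries.mk (fun n => (-1) ^ n * (y - algebraMap F L w)⁻¹ ^ (n + 1)) := by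
    ext n
    simp [Finset.mul_sum]
  rw [← Polynomial.coe_C, ← hderiv, hsum, hprod, Finset.mul_sum, ← coeToPowerSeries.ringHom_apply,
    ← coeToPowerSeries.ringHom_apply, map_sum]
  refine Finset.sum_congr rfl fun w hw => ?_
  rw [← Finset.mul_prod_erase s _ hw, map_mul, mul_right_comm, coeToPowerSeries.ringHom_apply,
    Polynomial.coe_add, Polynomial.coe_X, Polynomial.coe_C, X_add_C_mul_mk_inv (hy w hw), one_mul]

lemma aeval_nodal_mul_sum_inv {F L : Type*} [Field F] [Field L] [Algebra F L] {s : Finset F}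
    (h0 : 0 ∈ s) (hs : ∀ w ∈ s, ∀ x, x + w ∈ s ↔ x ∈ s) {y : L}
    (hy : ∀ w ∈ s, y - algebraMap F L w ≠ 0) :
    aeval y (nodal s id) * ∑ w ∈ s, (y - algebraMap F L w)⁻¹ =
      algebraMap F L ((nodal s id).coeff 1) := by
  have h := congrArg (PowerSeries.coeff 0) (nodal_add_mul_mk_sum_inv_pow h0 hs y hy)
  rwa [PowerSeries.coeff_mul, Finset.Nat.antidiagonal_zero, Finset.sum_singleton,
    Polynomial.coeff_coe, PowerSeries.coeff_mk, coeff_add, coeff_map, nodal_coeff_zero h0,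
    map_zero, zero_add, coeff_C_zero, PowerSeries.coeff_zero_C,
    pow_zero, one_mul, Finset.sum_congr rfl fun w _ => pow_one (y - algebraMap F L w)⁻¹] at h

/-- An explicit form of the Goss polynomial of index `n + 1`, up to sign. -/
lemma sum_inv_pow_eq {F L : Type*} [Field F] [Field L] [Algebra F L] {s : Finset F}
    (h0 : 0 ∈ s) (hs : ∀ w ∈ s, ∀ x, x + w ∈ s ↔ x ∈ s) {y : L}
    (hy : ∀ w ∈ s, y - algebraMap F L w ≠ 0) (n : ℕ) :
    (-1) ^ n * ∑ w ∈ s, (y - algebraMap F L w)⁻¹ ^ (n + 1) =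
      aeval (∑ w ∈ s, (y - algebraMap F L w)⁻¹)
        (∑ k ∈ Finset.range (n + 1),
          C ((-((nodal s id).coeff 1)⁻¹) ^ k * ((nodal s id) ^ k).coeff n) * X ^ (k + 1)) := by
  set P := nodal s id with hP
  set c := P.coeff 1
  set t := ∑ w ∈ s, (y - algebraMap F L w)⁻¹ with ht
  set B : PowerSeries L :=
    PowerSeries.mk (fun n => (-1) ^ n * ∑ w ∈ s, (y - algebraMap F L w)⁻¹ ^ (n + 1)) with hB
  have hc : algebraMap F L c ≠ 0 := by
    simpa using nodal_coeff_one_ne_zero h0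
  have hgen := nodal_add_mul_mk_sum_inv_pow h0 hs y hy
  rw [← hP, ← hB, Polynomial.coe_add, Polynomial.coe_C] at hgen
  have hPt : aeval y P * t = algebraMap F L c := aeval_nodal_mul_sum_inv h0 hs hy
  clear_value t
  set r := t * (algebraMap F L c)⁻¹ with hr
  have hrP : r * aeval y P = 1 := by
    rw [hr, mul_right_comm, mul_comm t, hPt, mul_inv_cancel₀ hc]
  set Z : PowerSeries L := PowerSeries.C (-r) * (P.map (algebraMap F L) : L[X])
  have hZ : (1 - Z) * B = PowerSeries.C t := by
    have h := congrArg (PowerSeries.C r * ·) hgen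
    simp only [← mul_assoc, mul_add, ← map_mul, hrP] at h
    rw [hr, inv_mul_cancel_right₀ hc, ← hr] at h
    rw [← h]
    simp only [Z, map_neg, map_one]
    ring
  have hgeom : B = (∑ k ∈ Finset.range (n + 1), Z ^ k) * PowerSeries.C t + Z ^ (n + 1) * B := by
    rw [← hZ, ← mul_assoc, geom_sum_mul_neg]
    ring
  have hX : PowerSeries.X ∣ Z := by
    rw [PowerSeries.X_dvd_iff]
    rw [map_mul, ← PowerSeries.coeff_zero_eq_constantCoeff_apply (_ : PowerSeries L),
      ← PowerSeries.coeff_zero_eq_constantCoeff_apply (_ : PowerSeries L), Polynomial.coeff_coe,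
      coeff_map, hP, nodal_coeff_zero h0, map_zero, mul_zero]
  have hlast : PowerSeries.coeff n (Z ^ (n + 1) * B) = 0 :=
    PowerSeries.X_pow_dvd_iff.1 ((pow_dvd_pow_of_dvd hX _).mul_right B) n n.lt_succ_self
  have hcoeff := congrArg (PowerSeries.coeff n) hgeom
  rw [map_add, hlast, add_zero, Finset.sum_mul, map_sum, hB, PowerSeries.coeff_mk] at hcoeff
  rw [hcoeff, map_sum]
  refine Finset.sum_congr rfl fun k _ => ?_
  rw [PowerSeries.coeff_mul_C, mul_pow, ← map_pow, PowerSeries.coeff_C_mul, ← Polynomial.coe_pow,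
    Polynomial.coeff_coe, ← Polynomial.map_pow, coeff_map]
  simp only [map_mul, aeval_C, map_pow, aeval_X, map_neg, map_inv₀, hr]
  ring

/-- Let `F` be a field of characteristic `p` containing `𝔽_q`, `W ⊆ F` a
finite `𝔽_q`-submodule, and `n > q - 1` with `n ≡ 0` or `n ≡ -1 (mod q)`.  Then the
coefficient of `X^(q-1)` in the `n`-th Goss polynomial `G_{n,W}` vanishes, where `G_{n,W}`
is characterized by `∑_{w ∈ W} (z-w)^{-n} = G_{n,W}(∑_{w ∈ W} (z-w)^{-1})` in `F(z)`. -/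
theorem goss_polynomial_no_q_sub_one_term
    (p : ℕ) (hp : p.Prime)
    (Fq : Type) [Field Fq] [Fintype Fq] [CharP Fq p]
    (F : Type) [Field F] [CharP F p] [Algebra Fq F]
    (W : Submodule Fq F) (hW : (W : Set F).Finite)
    (n : ℕ) (hn : Fintype.card Fq - 1 < n)
    (hmod : n % Fintype.card Fq = 0 ∨ (n + 1) % Fintype.card Fq = 0)
    (G : Polynomial F)
    (hG : (∑ w ∈ hW.toFinset, ((RatFunc.X - RatFunc.C w)⁻¹) ^ n) =
      Polynomial.aeval (∑ w ∈ hW.toFinset, (RatFunc.X - RatFunc.C w)⁻¹) G) :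
    G.coeff (Fintype.card Fq - 1) = 0 := by
  have : Fact p.Prime := ⟨hp⟩
  obtain ⟨m, rfl⟩ : ∃ m, n = m + 1 := ⟨n - 1, by omega⟩
  have hq : 1 < Fintype.card Fq := Fintype.one_lt_card
  set q := Fintype.card Fq with hqdef
  set s := hW.toFinset
  have hmem : ∀ x, x ∈ s ↔ x ∈ W := by simp [s]
  have h0 : (0 : F) ∈ s := (hmem 0).2 W.zero_mem
  have hs : ∀ w ∈ s, ∀ x, x + w ∈ s ↔ x ∈ s := by
    intro w hw x
    rw [hmem] at hw ⊢
    rw [hmem, W.add_mem_iff_left hw]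
  have hsupp : ∀ i, (nodal s id).coeff i ≠ 0 → i = 1 ∨ q ∣ i := by
    intro i hi
    obtain ⟨j, rfl⟩ := eq_prime_pow_of_nodal_coeff_ne_zero (p := p) h0 hs hi
    obtain ⟨f, -, hf⟩ := FiniteField.card Fq p
    rcases le_or_gt (f : ℕ) j with hfj | hjf
    · exact Or.inr (hqdef ▸ hf ▸ pow_dvd_pow p hfj)
    · left
      have hlt : p ^ j < q := by
        rw [hqdef, hf]
        exact Nat.pow_lt_pow_right hp.one_lt hjf
      have hpos : 0 < p ^ j := pow_pos hp.pos j
      have hdvd : q - 1 ∣ p ^ j - 1 := by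
        rw [hqdef, ← FiniteField.forall_pow_eq_one_iff Fq]
        intro a
        have ha : algebraMap Fq F a ≠ 0 := by simp
        have h := pow_eq_self_of_nodal_coeff_ne_zero h0 ha (fun x => by
          rw [hmem, hmem, ← Algebra.smul_def]
          exact W.smul_mem_iff a.ne_zero) hi
        rw [← map_pow] at h
        have h' : a ^ (p ^ j) = a := Units.ext (by simpa using (algebraMap Fq F).injective h)
        rw [← Nat.sub_add_cancel hpos, pow_succ] at h'
        simpa using h'
      have := Nat.eq_zero_of_dvd_of_lt hdvd (by omega)
      omega
  have hy : ∀ w ∈ s, (RatFunc.X : RatFunc F) - algebraMap F (RatFunc F) w ≠ 0 := by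
    intro w _ h
    refine X_sub_C_ne_zero w (RatFunc.algebraMap_injective F ?_)
    simpa [RatFunc.algebraMap_eq_C] using h
  have hsum := sum_inv_pow_eq h0 hs hy
  set t := ∑ w ∈ s, ((RatFunc.X : RatFunc F) - algebraMap F (RatFunc F) w)⁻¹ with ht
  have htr : Transcendental F t := by
    refine RatFunc.transcendental_of_ne_C t ?_
    rintro ⟨c, hc⟩
    have h := aeval_nodal_mul_sum_inv h0 hs hy
    rw [← ht, hc, RatFunc.algebraMap_eq_C, ← RatFunc.algebraMap_X, aeval_algebraMap_apply,
      aeval_X_left_apply, ← RatFunc.algebraMap_C, ← RatFunc.algebraMap_C, ← map_mul] at h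
    have h' := congrArg (fun f => coeff f 0) (RatFunc.algebraMap_injective F h)
    simp only [coeff_mul_C, nodal_coeff_zero h0, zero_mul, coeff_C_zero] at h'
    exact nodal_coeff_one_ne_zero h0 h'.symm
  have haeval : aeval t (C ((-1) ^ m) * G) =
      (-1) ^ m * ∑ w ∈ s, (RatFunc.X - algebraMap F (RatFunc F) w)⁻¹ ^ (m + 1) := by
    simp only [map_mul, map_pow, map_neg, map_one, RatFunc.algebraMap_eq_C, hG, ht]
  have hGeq := transcendental_iff_injective.1 htr (haeval.trans (hsum m))
  have hc := congrArg (fun f => coeff f (q - 1)) hGeq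
  simp only [finsetSum_coeff, coeff_C_mul, coeff_X_pow] at hc
  rw [Finset.sum_eq_zero] at hc
  · simpa using hc
  intro k _
  split_ifs with hk
  · suffices ((nodal s id) ^ k).coeff m = 0 by simp [this]
    by_contra hne
    obtain ⟨a, b, rfl, hak, hab⟩ := exists_eq_add_mul_of_coeff_pow_ne_zero hsupp k m hne
    rcases hmod with h | h
    · rw [add_right_comm, Nat.add_mul_mod_self_left, Nat.mod_eq_of_lt (by omega)] at h
      omega
    · have h2 : a + q * b + 1 + 1 = a + 2 + q * b := by ring
      rw [h2, Nat.add_mul_mod_self_left] at h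
      have := Nat.le_of_dvd (by omega) (Nat.dvd_of_mod_eq_zero h)
      have hb := hab (by omega)
      subst hb
      omega
  · simp
end

section
/- Fix integers q ≥ 2, r ≥ 2, and j with 2 ≤ j ≤ r. For an integer d ≥ 1 let R_d = {q^{rd} − q^{rd−1}, q^{rd} − q^{rd−2}, …, q^{rd} − q^{rd−(j−1)}}. Then every natural number k admits at most one representation k = a₁ + a₂ + … + a_s with integers d₁ > d₂ > … > d_s ≥ 1 and a_t ∈ R_{d_t} for 1 ≤ t ≤ s; i.e. if k = Σ_{t=1}^s a_t = Σ_{t=1}^{s'} a'_t with d₁ > … > d_s ≥ 1, d'₁ > … > d'_{s'} ≥ 1, a_t ∈ R_{d_t}, a'_t ∈ R_{d'_t}, then s = s' and d_t = d'_t, a_t = a'_t for all t. -/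
/-- `a` lies in `{q^(rd) - q^(rd-1), …, q^(rd) - q^(rd-(r-1))}` with `d ≥ 1`. -/
def IsBlockDifference (q r d a : ℕ) : Prop :=
  1 ≤ d ∧ ∃ m : ℕ, 1 ≤ m ∧ m < r ∧ a + q ^ (r * d - m) = q ^ (r * d)

theorem mul_pred_le_mul_sub {r d m : ℕ} (hd : 1 ≤ d) (hm : m < r) :
    r * (d - 1) ≤ r * d - m := by
  obtain ⟨e, rfl⟩ := Nat.exists_eq_add_of_le' hd
  rw [Nat.add_sub_cancel, Nat.mul_succ]
  omega

theorem two_mul_pow_le_pow_of_lt {q m n : ℕ} (hq : 2 ≤ q) (h : m < n) :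
    2 * q ^ m ≤ q ^ n :=
  calc 2 * q ^ m ≤ q * q ^ m := Nat.mul_le_mul_right _ hq
    _ = q ^ (m + 1) := (pow_succ' q m).symm
    _ ≤ q ^ n := Nat.pow_le_pow_right (by omega) h

namespace IsBlockDifference

variable {q r d d' a a' x x' : ℕ}

theorem of_eq_sub {m : ℕ} (hq : 2 ≤ q) (hd : 1 ≤ d) (hm : 1 ≤ m) (hmr : m < r)
    (h : a = q ^ (r * d) - q ^ (r * d - m)) : IsBlockDifference q r d a := by
  have : q ^ (r * d - m) ≤ q ^ (r * d) := Nat.pow_le_pow_right (by omega) (Nat.sub_le _ _)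
  exact ⟨hd, m, hm, hmr, by omega⟩

theorem add_lt_pow (hq : 2 ≤ q) (h : IsBlockDifference q r d a) (hx : x < q ^ (r * (d - 1))) :
    a + x < q ^ (r * d) := by
  obtain ⟨hd, m, -, hmr, h⟩ := h
  have : q ^ (r * (d - 1)) ≤ q ^ (r * d - m) :=
    Nat.pow_le_pow_right (by omega) (mul_pred_le_mul_sub hd hmr)
  omega

theorem pow_pred_le (hq : 2 ≤ q) (h : IsBlockDifference q r d a) : q ^ (r * (d - 1)) ≤ a := by
  obtain ⟨hd, m, hm, hmr, h⟩ := h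
  have h₁ : q ^ (r * (d - 1)) ≤ q ^ (r * d - m) :=
    Nat.pow_le_pow_right (by omega) (mul_pred_le_mul_sub hd hmr)
  have hrd : 0 < r * d := Nat.mul_pos (by omega) hd
  have h₂ : 2 * q ^ (r * d - m) ≤ q ^ (r * d) := two_mul_pow_le_pow_of_lt hq (by omega)
  omega

theorem add_lt_add_of_lt (hq : 2 ≤ q) (h : IsBlockDifference q r d a)
    (h' : IsBlockDifference q r d' a') (hx : x < q ^ (r * (d - 1))) (hdd : d < d') :
    a + x < a' + x' :=
  calc a + x < q ^ (r * d) := h.add_lt_pow hq hx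
    _ ≤ q ^ (r * (d' - 1)) :=
      Nat.pow_le_pow_right (by omega) (Nat.mul_le_mul_left _ (by omega))
    _ ≤ a' := h'.pow_pred_le hq
    _ ≤ a' + x' := Nat.le_add_right _ _

theorem add_lt_of_lt (hq : 2 ≤ q) (h : IsBlockDifference q r d a)
    (h' : IsBlockDifference q r d a') (hx : x < q ^ (r * (d - 1))) (haa : a < a') :
    a + x < a' := by
  obtain ⟨hd, m, -, hmr, h⟩ := h
  obtain ⟨-, m', -, hmr', h'⟩ := h'
  have hlt : r * d - m' < r * d - m :=
    (Nat.pow_lt_pow_iff_right (a := q) (by omega)).mp (by omega)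
  have h₁ : q ^ (r * (d - 1)) ≤ q ^ (r * d - m') :=
    Nat.pow_le_pow_right (by omega) (mul_pred_le_mul_sub hd hmr')
  have h₂ := two_mul_pow_le_pow_of_lt hq hlt
  omega

theorem eq_of_add_eq_add (hq : 2 ≤ q) (h : IsBlockDifference q r d a)
    (h' : IsBlockDifference q r d' a') (hx : x < q ^ (r * (d - 1)))
    (hx' : x' < q ^ (r * (d' - 1))) (heq : a + x = a' + x') : d = d' ∧ a = a' := by
  obtain hdd | rfl | hdd := lt_trichotomy d d'
  · exact absurd heq (h.add_lt_add_of_lt hq h' hx hdd).ne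
  · obtain haa | haa | haa := lt_trichotomy a a'
    · have := h.add_lt_of_lt hq h' hx haa
      omega
    · exact ⟨rfl, haa⟩
    · have := h'.add_lt_of_lt hq h hx' haa
      omega
  · exact absurd heq.symm (h'.add_lt_add_of_lt hq h hx' hdd).ne

end IsBlockDifference

/-- The first `s` values of `a` are block differences at the strictly decreasing levels given
by `d`. -/
def IsBlockExpansion (q r s : ℕ) (d a : ℕ → ℕ) : Prop :=
  (∀ t t' : ℕ, t < t' → t' < s → d t' < d t) ∧ ∀ t < s, IsBlockDifference q r (d t) (a t)

namespace IsBlockExpansion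

variable {q r s s' : ℕ} {d a d' a' : ℕ → ℕ}

theorem tail (h : IsBlockExpansion q r (s + 1) d a) :
    IsBlockExpansion q r s (fun t => d (t + 1)) (fun t => a (t + 1)) :=
  ⟨fun t t' htt ht => h.1 (t + 1) (t' + 1) (by omega) (by omega),
    fun t ht => h.2 (t + 1) (by omega)⟩

theorem sum_lt_pow (hq : 2 ≤ q) {D : ℕ} (h : IsBlockExpansion q r s d a)
    (hD : ∀ t < s, d t ≤ D) : ∑ t ∈ Finset.range s, a t < q ^ (r * D) := by
  induction s generalizing d a D with
  | zero => simpa using Nat.pow_pos (by omega)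
  | succ s ih =>
    rw [Finset.sum_range_succ', Nat.add_comm]
    have htail := ih h.tail (D := d 0 - 1) fun t ht => by
      have := h.1 0 (t + 1) (by omega) (by omega)
      omega
    exact ((h.2 0 (by omega)).add_lt_pow hq htail).trans_le
      (Nat.pow_le_pow_right (by omega) (Nat.mul_le_mul_left _ (hD 0 (by omega))))

theorem sum_tail_lt_pow (hq : 2 ≤ q) (h : IsBlockExpansion q r (s + 1) d a) :
    ∑ t ∈ Finset.range s, a (t + 1) < q ^ (r * (d 0 - 1)) :=
  h.tail.sum_lt_pow hq fun t ht => by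
    have := h.1 0 (t + 1) (by omega) (by omega)
    omega

theorem sum_pos (hq : 2 ≤ q) (h : IsBlockExpansion q r (s + 1) d a) :
    0 < ∑ t ∈ Finset.range (s + 1), a t := by
  rw [Finset.sum_range_succ']
  have h₁ := (h.2 0 (by omega)).pow_pred_le hq
  have h₂ : 0 < q ^ (r * (d 0 - 1)) := Nat.pow_pos (by omega)
  omega

theorem eq_of_sum_eq (hq : 2 ≤ q) (h : IsBlockExpansion q r s d a)
    (h' : IsBlockExpansion q r s' d' a')
    (hsum : ∑ t ∈ Finset.range s, a t = ∑ t ∈ Finset.range s', a' t) :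
    s = s' ∧ ∀ t < s, d t = d' t ∧ a t = a' t := by
  induction s generalizing s' d a d' a' with
  | zero =>
    cases s' with
    | zero => simp
    | succ s' => exact absurd hsum (h'.sum_pos hq).ne
  | succ s ih =>
    cases s' with
    | zero => exact absurd hsum (h.sum_pos hq).ne'
    | succ s' =>
      rw [Finset.sum_range_succ', Finset.sum_range_succ'] at hsum
      have h₀ := (h.2 0 (by omega)).eq_of_add_eq_add hq (h'.2 0 (by omega))
        (h.sum_tail_lt_pow hq) (h'.sum_tail_lt_pow hq) (by omega)
      obtain ⟨rfl, ht⟩ := ih h.tail h'.tail (by omega)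
      refine ⟨rfl, fun t hts => ?_⟩
      cases t with
      | zero => exact h₀
      | succ t => exact ht t (by omega)

end IsBlockExpansion

/-- Fix integers `q ≥ 2`, `r ≥ 2` and `2 ≤ j ≤ r`.  For `d ≥ 1` let
`R_d = {q^(rd) - q^(rd-1), …, q^(rd) - q^(rd-(j-1))}`.  Every natural number `k` admits at
most one representation `k = a 0 + ⋯ + a (s-1)` with strictly decreasing `d 0 > ⋯ > d (s-1) ≥ 1`
and `a t ∈ R_(d t)` for all `t < s`. -/
theorem unmixedness_unique_representation
    (q r j : ℕ) (hq : 2 ≤ q) (hr : 2 ≤ r) (hj : 2 ≤ j) (hjr : j ≤ r)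
    (k s s' : ℕ) (d a d' a' : ℕ → ℕ)
    (hmono : ∀ t t' : ℕ, t < t' → t' < s → d t' < d t)
    (hmono' : ∀ t t' : ℕ, t < t' → t' < s' → d' t' < d' t)
    (hd1 : ∀ t < s, 1 ≤ d t)
    (hd1' : ∀ t < s', 1 ≤ d' t)
    (ha : ∀ t < s, ∃ m : ℕ, 1 ≤ m ∧ m ≤ j - 1 ∧ a t = q ^ (r * d t) - q ^ (r * d t - m))
    (ha' : ∀ t < s', ∃ m : ℕ, 1 ≤ m ∧ m ≤ j - 1 ∧ a' t = q ^ (r * d' t) - q ^ (r * d' t - m))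
    (hsum : ∑ t ∈ Finset.range s, a t = k)
    (hsum' : ∑ t ∈ Finset.range s', a' t = k) :
    s = s' ∧ ∀ t < s, d t = d' t ∧ a t = a' t := by
  have expansion {s : ℕ} {d a : ℕ → ℕ} (hmono : ∀ t t' : ℕ, t < t' → t' < s → d t' < d t)
      (hd1 : ∀ t < s, 1 ≤ d t)
      (ha : ∀ t < s, ∃ m : ℕ, 1 ≤ m ∧ m ≤ j - 1 ∧
        a t = q ^ (r * d t) - q ^ (r * d t - m)) : IsBlockExpansion q r s d a := by
    refine ⟨hmono, fun t ht => ?_⟩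
    obtain ⟨m, hm, hmj, hat⟩ := ha t ht
    exact .of_eq_sub hq (hd1 t ht) hm (by omega) hat
  exact (expansion hmono hd1 ha).eq_of_sum_eq hq (expansion hmono' hd1' ha')
    (hsum.trans hsum'.symm)
end
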